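/- There exists a constant C > 0 such that for every T > 0 and every smooth solution u of the 1-dimensional Schrödinger flow with Neumann boundary conditions on [0,T], for all t ∈ [0,T]: ∫₀¹ |∂_t∂_x³u(x,t)|² dx ≤ C ( ‖u(·,t)‖²_{H³} + ‖∂_t u(·,t)‖²_{H¹} + 1 )⁴ ( ‖∂_t²u(·,t)‖²_{H¹} + 1 ). -/

import Mathlib

open MeasureTheory Set

noncomputable section

abbrev E3 := EuclideanSpace ℝ (Fin 3)

/-- The cross product on `EuclideanSpace ℝ (Fin 3)`. -/
def cross3 (a b : E3) : E3 :=
  (WithLp.equiv 2 (Fin 3 → ℝ)).symm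
    (crossProduct ((WithLp.equiv 2 (Fin 3 → ℝ)) a) ((WithLp.equiv 2 (Fin 3 → ℝ)) b))

/-- Partial derivative in the space variable of `u = u x t`. -/
def pdx (u : ℝ → ℝ → E3) : ℝ → ℝ → E3 := fun x t => deriv (fun y => u y t) x

/-- Partial derivative in the time variable of `u = u x t`. -/
def pdt (u : ℝ → ℝ → E3) : ℝ → ℝ → E3 := fun x t => deriv (fun s => u x s) t

/-- `u` is a smooth solution of the 1-dimensional Schrödinger flow with Neumann
boundary conditions on `[0,1] × [0,T]`. -/
def IsSol (T : ℝ) (u : ℝ → ℝ → E3) : Prop :=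
  ContDiff ℝ (⊤ : ℕ∞) (fun p : ℝ × ℝ => u p.1 p.2) ∧
  (∀ x ∈ Icc (0:ℝ) 1, ∀ t ∈ Icc (0:ℝ) T, ‖u x t‖ = 1) ∧
  (∀ x ∈ Icc (0:ℝ) 1, ∀ t ∈ Icc (0:ℝ) T, pdt u x t = cross3 (u x t) (pdx (pdx u) x t)) ∧
  (∀ t ∈ Icc (0:ℝ) T, pdx u 0 t = 0 ∧ pdx u 1 t = 0)

/-- Squared `L²` norm on `[0,1]`. -/
def L2sq (f : ℝ → E3) : ℝ := ∫ x in (0:ℝ)..1, ‖f x‖ ^ 2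

/-- Squared `H^k` Sobolev norm on `[0,1]`. -/
def Hsq (k : ℕ) (f : ℝ → E3) : ℝ :=
  ∑ j ∈ Finset.range (k + 1), ∫ x in (0:ℝ)..1, ‖deriv^[j] f x‖ ^ 2

/-!
Differentiating `|u|² = 1` twice in `x` gives `⟨u, u_xx⟩ = -|u_x|²`, so taking the cross product of
the equation `u_t = u × u_xx` with `u` solves it for the second derivative:
`u_xx = -u × u_t - |u_x|² u`. One derivative in `t` and one in `x` express `u_txxx` through `u_t`,
`u_tt`, their first `x`-derivatives and `u_txx`, with coefficients built from `u`, `u_x` and `u_xx`;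
the formula for `u_txx` eliminates the latter. The Sobolev embedding `H¹ ⊂ L^∞` bounds `u_x` and
`u_xx` pointwise by the `H³` norm of `u`, and the pointwise bound is integrated over `[0, 1]`.
-/

lemma norm_cross3_le (a b : E3) : ‖cross3 a b‖ ≤ ‖a‖ * ‖b‖ :=
  (InnerProductGeometry.norm_ofLp_crossProduct a b).trans_le
    (mul_le_of_le_one_right (by positivity) (Real.sin_le_one _))

lemma cross3_self (a : E3) : cross3 a a = 0 := by
  simp [cross3]

lemma cross3_cross3 (a b c : E3) :
    cross3 a (cross3 b c) = (inner ℝ a c : ℝ) • b - (inner ℝ b a : ℝ) • c := by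
  apply WithLp.ofLp_injective 2
  simp [cross3, cross_cross_eq_smul_sub_smul', EuclideanSpace.inner_eq_star_dotProduct,
    dotProduct_comm]

/-- The cross product of `E3` as a continuous bilinear map; it gives access to the product rule. -/
def cross3CLM : E3 →L[ℝ] E3 →L[ℝ] E3 :=
  LinearMap.mkContinuous₂
    (LinearMap.mk₂ ℝ cross3 (by simp [cross3]) (by simp [cross3]) (by simp [cross3])
      (by simp [cross3]))
    1 (by simpa using norm_cross3_le)

lemma hasDerivAt_cross3 {f g : ℝ → E3} {f' g' : E3} {x : ℝ} (hf : HasDerivAt f f' x)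
    (hg : HasDerivAt g g' x) :
    HasDerivAt (fun y => cross3 (f y) (g y)) (cross3 (f x) g' + cross3 f' (g x)) x :=
  cross3CLM.hasDerivAt_of_bilinear (fun _ => hf) (fun _ => hg)

lemma norm_two_mul_inner_smul_le {E F : Type*} [NormedAddCommGroup E] [InnerProductSpace ℝ E]
    [NormedAddCommGroup F] [NormedSpace ℝ F] (a b : E) (c : F) :
    ‖(2 * inner ℝ a b) • c‖ ≤ 2 * (‖a‖ * ‖b‖ * ‖c‖) := by
  rw [norm_smul, norm_mul, Real.norm_two, mul_assoc]
  gcongr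
  exact norm_inner_le_norm a b

lemma hasDerivAt_eq_of_eqOn {F : Type*} [NormedAddCommGroup F] [NormedSpace ℝ F]
    {s : Set ℝ} {x : ℝ} (hs : UniqueDiffWithinAt ℝ s x) {f g : ℝ → F} (hfg : EqOn f g s)
    (hx : x ∈ s) {f' g' : F} (hf : HasDerivAt f f' x) (hg : HasDerivAt g g' x) : f' = g' :=
  hs.eq_deriv s hf.hasDerivWithinAt (hg.hasDerivWithinAt.congr hfg (hfg hx))

section PartialDerivatives

open Function

variable {u : ℝ → ℝ → E3} {m n : WithTop ℕ∞}

lemma hasDerivAt_pdx (hu : Differentiable ℝ (uncurry u)) (x t : ℝ) :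
    HasDerivAt (fun y => u y t) (pdx u x t) x :=
  (hu.comp (f := fun y => (y, t)) (by fun_prop) x).hasDerivAt

lemma hasDerivAt_pdt (hu : Differentiable ℝ (uncurry u)) (x t : ℝ) :
    HasDerivAt (fun s => u x s) (pdt u x t) t :=
  (hu.comp (f := fun s => (x, s)) (by fun_prop) t).hasDerivAt

lemma uncurry_pdx (hu : Differentiable ℝ (uncurry u)) :
    uncurry (pdx u) = fun p => fderiv ℝ (uncurry u) p (1, 0) := by
  ext1 ⟨x, t⟩
  exact (hasDerivAt_pdx hu x t).unique <|
    (hu (x, t)).hasFDerivAt.comp_hasDerivAt (f := fun y => (y, t)) x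
      ((hasDerivAt_id x).prodMk (hasDerivAt_const x t))

lemma uncurry_pdt (hu : Differentiable ℝ (uncurry u)) :
    uncurry (pdt u) = fun p => fderiv ℝ (uncurry u) p (0, 1) := by
  ext1 ⟨x, t⟩
  exact (hasDerivAt_pdt hu x t).unique <|
    (hu (x, t)).hasFDerivAt.comp_hasDerivAt (f := fun s => (x, s)) t
      ((hasDerivAt_const t x).prodMk (hasDerivAt_id t))

lemma contDiff_pdx (hu : ContDiff ℝ n (uncurry u)) (hmn : m + 1 ≤ n) :
    ContDiff ℝ m (uncurry (pdx u)) := by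
  rw [uncurry_pdx ((hu.of_le (le_add_self.trans hmn)).differentiable one_ne_zero)]
  exact (hu.fderiv_right hmn).clm_apply contDiff_const

lemma contDiff_pdt (hu : ContDiff ℝ n (uncurry u)) (hmn : m + 1 ≤ n) :
    ContDiff ℝ m (uncurry (pdt u)) := by
  rw [uncurry_pdt ((hu.of_le (le_add_self.trans hmn)).differentiable one_ne_zero)]
  exact (hu.fderiv_right hmn).clm_apply contDiff_const

lemma pdt_pdx_comm (hu : ContDiff ℝ 2 (uncurry u)) : pdt (pdx u) = pdx (pdt u) := by
  have hd : Differentiable ℝ (uncurry u) := hu.differentiable two_ne_zero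
  have hd' : Differentiable ℝ (fderiv ℝ (uncurry u)) :=
    (hu.fderiv_right (m := 1) one_add_one_eq_two.le).differentiable one_ne_zero
  have hx : ContDiff ℝ 1 (uncurry (pdx u)) := contDiff_pdx hu one_add_one_eq_two.le
  have ht : ContDiff ℝ 1 (uncurry (pdt u)) := contDiff_pdt hu one_add_one_eq_two.le
  have fderiv_apply (p v : ℝ × ℝ) : fderiv ℝ (fun q => fderiv ℝ (uncurry u) q v) p =
      (fderiv ℝ (fderiv ℝ (uncurry u)) p).flip v := by
    simp [fderiv_clm_apply (hd' p) (differentiableAt_const v)]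
  have symm (p : ℝ × ℝ) : IsSymmSndFDerivAt ℝ (uncurry u) p :=
    hu.contDiffAt.isSymmSndFDerivAt (by simp)
  apply uncurry_injective
  rw [uncurry_pdt (hx.differentiable one_ne_zero), uncurry_pdx (ht.differentiable one_ne_zero),
    uncurry_pdx hd, uncurry_pdt hd]
  ext1 p
  simpa only [fderiv_apply, ContinuousLinearMap.flip_apply] using symm p (0, 1) (1, 0)

lemma pdt_iterate_pdx_comm (k : ℕ) (hu : ContDiff ℝ (k + 1 : ℕ) (uncurry u)) :
    pdt (pdx^[k] u) = pdx^[k] (pdt u) := by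
  induction k generalizing u with
  | zero => rfl
  | succ k ih =>
    calc pdt (pdx^[k] (pdx u)) = pdx^[k] (pdt (pdx u)) := ih (contDiff_pdx hu le_rfl)
      _ = pdx^[k] (pdx (pdt u)) := by
        rw [pdt_pdx_comm (hu.of_le (mod_cast Nat.le_add_left 2 k))]

lemma contDiff_slice (hu : ContDiff ℝ n (uncurry u)) (t : ℝ) : ContDiff ℝ n (fun x => u x t) :=
  hu.comp (contDiff_id.prodMk contDiff_const)

end PartialDerivatives

section Sobolev

lemma norm_sq_sub_norm_sq_le_integral {F : Type*} [NormedAddCommGroup F]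
    [InnerProductSpace ℝ F] {a b x y : ℝ} {f f' : ℝ → F} (hx : x ∈ Icc a b) (hy : y ∈ Icc a b)
    (hf : ∀ z ∈ Icc a b, HasDerivAt f (f' z) z) (hf' : ContinuousOn f' (Icc a b)) :
    ‖f x‖ ^ 2 - ‖f y‖ ^ 2 ≤ ∫ z in a..b, (‖f z‖ ^ 2 + ‖f' z‖ ^ 2) := by
  have hab : a ≤ b := hx.1.trans hx.2
  have hyx : uIcc y x ⊆ Icc a b := uIcc_subset_Icc hy hx
  have hfc : ContinuousOn f (Icc a b) := fun z hz => (hf z hz).continuousAt.continuousWithinAt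
  have hg : ContinuousOn (fun z => ‖f z‖ ^ 2 + ‖f' z‖ ^ 2) (Icc a b) := by fun_prop
  have ftc : ∫ z in y..x, 2 * inner ℝ (f z) (f' z) = ‖f x‖ ^ 2 - ‖f y‖ ^ 2 :=
    intervalIntegral.integral_eq_sub_of_hasDerivAt (fun z hz => (hf z (hyx hz)).norm_sq)
      (((hfc.inner hf').const_smul (2 : ℝ)).mono hyx).intervalIntegrable
  have two_inner_le (z : ℝ) : ‖2 * inner ℝ (f z) (f' z)‖ ≤ ‖f z‖ ^ 2 + ‖f' z‖ ^ 2 := by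
    rw [norm_mul, Real.norm_two]
    linarith [norm_inner_le_norm (𝕜 := ℝ) (f z) (f' z), two_mul_le_add_sq ‖f z‖ ‖f' z‖]
  calc ‖f x‖ ^ 2 - ‖f y‖ ^ 2
      ≤ ‖∫ z in y..x, 2 * inner ℝ (f z) (f' z)‖ := ftc ▸ le_abs_self _
    _ ≤ |∫ z in y..x, (‖f z‖ ^ 2 + ‖f' z‖ ^ 2)| :=
        intervalIntegral.norm_integral_le_abs_of_norm_le (.of_forall two_inner_le)
          (hg.mono hyx).intervalIntegrable
    _ ≤ |∫ z in a..b, (‖f z‖ ^ 2 + ‖f' z‖ ^ 2)| :=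
        intervalIntegral.abs_integral_mono_interval
          (by
            rw [uIoc_of_le hab]
            exact Ioc_subset_Ioc (le_min hy.1 hx.1) (max_le hy.2 hx.2))
          (.of_forall fun z => by positivity) (hg.intervalIntegrable_of_Icc hab)
    _ = ∫ z in a..b, (‖f z‖ ^ 2 + ‖f' z‖ ^ 2) :=
        abs_of_nonneg (intervalIntegral.integral_nonneg hab fun z _ => by positivity)

lemma norm_sq_le_average_add_integral {F : Type*} [NormedAddCommGroup F]
    [InnerProductSpace ℝ F] {a b x : ℝ} {f f' : ℝ → F} (hab : a < b) (hx : x ∈ Icc a b)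
    (hf : ∀ z ∈ Icc a b, HasDerivAt f (f' z) z) (hf' : ContinuousOn f' (Icc a b)) :
    ‖f x‖ ^ 2 ≤ (⨍ z in a..b, ‖f z‖ ^ 2) + ∫ z in a..b, (‖f z‖ ^ 2 + ‖f' z‖ ^ 2) := by
  have hfc : ContinuousOn (fun z => ‖f z‖ ^ 2) (uIcc a b) := by
    rw [uIcc_of_le hab.le]
    exact fun z hz => (hf z hz).norm_sq.continuousAt.continuousWithinAt
  obtain ⟨y, hy, hfy⟩ := exists_eq_interval_average hab.ne hfc
  rw [uIoo_of_le hab.le] at hy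
  rw [← hfy, ← sub_le_iff_le_add']
  exact norm_sq_sub_norm_sq_le_integral hx (Ioo_subset_Icc_self hy) hf hf'

variable {f : ℝ → E3}

lemma integral_norm_sq_iterate_deriv_nonneg (f : ℝ → E3) (j : ℕ) :
    0 ≤ ∫ x in (0 : ℝ)..1, ‖deriv^[j] f x‖ ^ 2 :=
  intervalIntegral.integral_nonneg zero_le_one fun _ _ => sq_nonneg _

lemma Hsq_nonneg (k : ℕ) (f : ℝ → E3) : 0 ≤ Hsq k f :=
  Finset.sum_nonneg fun j _ => integral_norm_sq_iterate_deriv_nonneg f j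

lemma Hsq_mono {k l : ℕ} (hkl : k ≤ l) (f : ℝ → E3) : Hsq k f ≤ Hsq l f :=
  Finset.sum_le_sum_of_subset_of_nonneg (by simpa using hkl)
    fun j _ _ => integral_norm_sq_iterate_deriv_nonneg f j

lemma Hsq_iterate_deriv_le (l k : ℕ) (f : ℝ → E3) : Hsq l (deriv^[k] f) ≤ Hsq (l + k) f := by
  induction k generalizing f with
  | zero => exact le_rfl
  | succ k ih =>
    refine (ih (deriv f)).trans ?_
    rw [Hsq, Hsq, ← add_assoc, Finset.sum_range_succ' _ (l + k + 1)]
    exact le_add_of_nonneg_right (integral_norm_sq_iterate_deriv_nonneg f 0)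

lemma Hsq_one (hf : ContDiff ℝ 1 f) :
    Hsq 1 f = ∫ x in (0 : ℝ)..1, (‖f x‖ ^ 2 + ‖deriv f x‖ ^ 2) := by
  have hf₀ : Continuous fun x => ‖f x‖ ^ 2 := hf.continuous.norm.pow 2
  have hf₁ : Continuous fun x => ‖deriv f x‖ ^ 2 := hf.continuous_deriv_one.norm.pow 2
  rw [intervalIntegral.integral_add (hf₀.intervalIntegrable _ _) (hf₁.intervalIntegrable _ _)]
  simp [Hsq, Finset.sum_range_succ]

lemma norm_sq_le_two_mul_Hsq_one (hf : ContDiff ℝ 1 f) {x : ℝ} (hx : x ∈ Icc (0 : ℝ) 1) :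
    ‖f x‖ ^ 2 ≤ 2 * Hsq 1 f := by
  have sobolev := norm_sq_le_average_add_integral zero_lt_one hx
    (fun z _ => (hf.differentiable one_ne_zero z).hasDerivAt) hf.continuous_deriv_one.continuousOn
  have average_le : ⨍ z in (0 : ℝ)..1, ‖f z‖ ^ 2 ≤ Hsq 1 f := by
    simpa only [interval_average_eq, Hsq, sub_zero, inv_one, one_smul, zero_add,
      Finset.sum_range_one, Function.iterate_zero, id_eq] using Hsq_mono zero_le_one f
  rw [← Hsq_one hf] at sobolev
  linarith

lemma norm_iterate_deriv_sq_le (k : ℕ) (hf : ContDiff ℝ (1 + k : ℕ) f) {x : ℝ}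
    (hx : x ∈ Icc (0 : ℝ) 1) : ‖deriv^[k] f x‖ ^ 2 ≤ 2 * Hsq (1 + k) f :=
  (norm_sq_le_two_mul_Hsq_one (mod_cast hf.iterate_deriv' 1 k) hx).trans
    (mul_le_mul_of_nonneg_left (Hsq_iterate_deriv_le 1 k f) zero_le_two)

lemma integral_norm_sq_le_Hsq_one_add {g h : ℝ → E3} {c : ℝ} (hf : ContDiff ℝ 1 f)
    (hg : ContDiff ℝ 1 g) (hh : Continuous h)
    (hle : ∀ x ∈ Icc (0 : ℝ) 1, ‖h x‖ ≤ c * (‖f x‖ + ‖deriv f x‖ + ‖g x‖ + ‖deriv g x‖)) :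
    ∫ x in (0 : ℝ)..1, ‖h x‖ ^ 2 ≤ 4 * c ^ 2 * (Hsq 1 f + Hsq 1 g) := by
  have : Continuous f := hf.continuous
  have : Continuous g := hg.continuous
  have : Continuous (deriv f) := hf.continuous_deriv_one
  have : Continuous (deriv g) := hg.continuous_deriv_one
  rw [Hsq_one hf, Hsq_one hg, ← intervalIntegral.integral_add,
    ← intervalIntegral.integral_const_mul]
  · refine intervalIntegral.integral_mono_on zero_le_one
      (Continuous.intervalIntegrable (by fun_prop) _ _)
      (Continuous.intervalIntegrable (by fun_prop) _ _) fun x hx => ?_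
    calc ‖h x‖ ^ 2
        ≤ (c * (‖f x‖ + ‖deriv f x‖ + ‖g x‖ + ‖deriv g x‖)) ^ 2 := by
          gcongr
          exact hle x hx
      _ = c ^ 2 * ((‖f x‖ + ‖deriv f x‖) + (‖g x‖ + ‖deriv g x‖)) ^ 2 := by ring
      _ ≤ c ^ 2 * (2 * (2 * (‖f x‖ ^ 2 + ‖deriv f x‖ ^ 2)
            + 2 * (‖g x‖ ^ 2 + ‖deriv g x‖ ^ 2))) := by
          gcongr
          exact add_sq_le.trans (by gcongr <;> exact add_sq_le)
      _ = 4 * c ^ 2 * (‖f x‖ ^ 2 + ‖deriv f x‖ ^ 2 + (‖g x‖ ^ 2 + ‖deriv g x‖ ^ 2)) := by ring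
  all_goals exact Continuous.intervalIntegrable (by fun_prop) _ _

lemma norm_pdx_sq_le {u : ℝ → ℝ → E3} (hu : ContDiff ℝ 2 (Function.uncurry u)) {x : ℝ}
    (hx : x ∈ Icc (0 : ℝ) 1) (t : ℝ) : ‖pdx u x t‖ ^ 2 ≤ 2 * Hsq 2 (fun y => u y t) :=
  norm_iterate_deriv_sq_le 1 (contDiff_slice hu t) hx

lemma norm_pdx_pdx_sq_le {u : ℝ → ℝ → E3} (hu : ContDiff ℝ 3 (Function.uncurry u)) {x : ℝ}
    (hx : x ∈ Icc (0 : ℝ) 1) (t : ℝ) : ‖pdx (pdx u) x t‖ ^ 2 ≤ 2 * Hsq 3 (fun y => u y t) :=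
  norm_iterate_deriv_sq_le 2 (contDiff_slice hu t) hx

end Sobolev

/-- A `C⁴` solution of the Schrödinger flow `u_t = u × u_xx` into the unit sphere for `x ∈ I` and
`t ∈ J`, without boundary conditions. As in `IsSol`, the map is defined and regular on `ℝ × ℝ`, so
that its partial derivatives on the boundary are the two-sided ones. -/
structure IsSchrodingerFlowOn (I J : Set ℝ) (u : ℝ → ℝ → E3) : Prop where
  contDiff : ContDiff ℝ 4 (Function.uncurry u)
  norm_eq_one : ∀ x ∈ I, ∀ t ∈ J, ‖u x t‖ = 1
  pdt_eq : ∀ x ∈ I, ∀ t ∈ J, pdt u x t = cross3 (u x t) (pdx (pdx u) x t)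

lemma IsSol.isSchrodingerFlowOn {T : ℝ} {u : ℝ → ℝ → E3} (hu : IsSol T u) :
    IsSchrodingerFlowOn (Icc 0 1) (Icc 0 T) u where
  contDiff := mod_cast contDiff_infty.1 hu.1 4
  norm_eq_one := hu.2.1
  pdt_eq := hu.2.2.1

namespace IsSchrodingerFlowOn

open Function

variable {I J : Set ℝ} {u : ℝ → ℝ → E3} {x t M : ℝ}

lemma inner_pdx_eq_zero (hu : IsSchrodingerFlowOn I J u) (hI : UniqueDiffOn ℝ I) (hx : x ∈ I)
    (ht : t ∈ J) : inner ℝ (u x t) (pdx u x t) = 0 := by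
  have hd : Differentiable ℝ (uncurry u) := hu.contDiff.differentiable four_ne_zero
  have := hasDerivAt_eq_of_eqOn (hI x hx) (g := fun _ => 1)
    (fun y hy => by simp [hu.norm_eq_one y hy t ht]) hx (hasDerivAt_pdx hd x t).norm_sq
    (hasDerivAt_const x 1)
  linarith

lemma inner_pdx_pdx_eq (hu : IsSchrodingerFlowOn I J u) (hI : UniqueDiffOn ℝ I) (hx : x ∈ I)
    (ht : t ∈ J) : inner ℝ (u x t) (pdx (pdx u) x t) = -‖pdx u x t‖ ^ 2 := by
  have hd : Differentiable ℝ (uncurry u) := hu.contDiff.differentiable four_ne_zero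
  have hd' : Differentiable ℝ (uncurry (pdx u)) :=
    (contDiff_pdx hu.contDiff three_add_one_eq_four.le).differentiable three_ne_zero
  have := hasDerivAt_eq_of_eqOn (hI x hx) (fun y hy => hu.inner_pdx_eq_zero hI hy ht) hx
    ((hasDerivAt_pdx hd x t).inner ℝ (hasDerivAt_pdx hd' x t)) (hasDerivAt_const x 0)
  rw [real_inner_self_eq_norm_sq] at this
  linarith

lemma pdx_pdx_eq (hu : IsSchrodingerFlowOn I J u) (hI : UniqueDiffOn ℝ I) (hx : x ∈ I)
    (ht : t ∈ J) :
    pdx (pdx u) x t = -cross3 (u x t) (pdt u x t) - ‖pdx u x t‖ ^ 2 • u x t := by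
  rw [hu.pdt_eq x hx t ht, cross3_cross3, hu.inner_pdx_pdx_eq hI hx ht,
    real_inner_self_eq_norm_sq, hu.norm_eq_one x hx t ht]
  module

lemma pdx_pdx_pdt_eq (hu : IsSchrodingerFlowOn I J u) (hI : UniqueDiffOn ℝ I)
    (hJ : UniqueDiffOn ℝ J) (hx : x ∈ I) (ht : t ∈ J) :
    pdx (pdx (pdt u)) x t = -cross3 (u x t) (pdt (pdt u) x t)
      - (‖pdx u x t‖ ^ 2 • pdt u x t
        + (2 * inner ℝ (pdx u x t) (pdx (pdt u) x t)) • u x t) := by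
  have hu₀ := hu.contDiff.differentiable four_ne_zero
  have hux : ContDiff ℝ 3 (uncurry (pdx u)) := contDiff_pdx hu.contDiff three_add_one_eq_four.le
  have hut : ContDiff ℝ 3 (uncurry (pdt u)) := contDiff_pdt hu.contDiff three_add_one_eq_four.le
  have huxx : ContDiff ℝ 2 (uncurry (pdx (pdx u))) := contDiff_pdx hux two_add_one_eq_three.le
  have comm₁ : pdt (pdx u) = pdx (pdt u) := pdt_iterate_pdx_comm 1 (hu.contDiff.of_le (by norm_num))
  have comm₂ : pdt (pdx (pdx u)) = pdx (pdx (pdt u)) :=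
    pdt_iterate_pdx_comm 2 (hu.contDiff.of_le (by norm_num))
  have := hasDerivAt_eq_of_eqOn (hJ t ht) (fun s hs => hu.pdx_pdx_eq hI hx hs) ht
    (hasDerivAt_pdt (huxx.differentiable two_ne_zero) x t)
    ((hasDerivAt_cross3 (hasDerivAt_pdt hu₀ x t)
      (hasDerivAt_pdt (hut.differentiable three_ne_zero) x t)).neg.sub
      ((hasDerivAt_pdt (hux.differentiable three_ne_zero) x t).norm_sq.smul
        (hasDerivAt_pdt hu₀ x t)))
  rwa [comm₁, comm₂, cross3_self, add_zero] at this

lemma pdx_pdx_pdx_pdt_eq (hu : IsSchrodingerFlowOn I J u) (hI : UniqueDiffOn ℝ I)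
    (hJ : UniqueDiffOn ℝ J) (hx : x ∈ I) (ht : t ∈ J) :
    pdx (pdx (pdx (pdt u))) x t =
      -(cross3 (u x t) (pdx (pdt (pdt u)) x t) + cross3 (pdx u x t) (pdt (pdt u) x t))
      - ((‖pdx u x t‖ ^ 2 • pdx (pdt u) x t
          + (2 * inner ℝ (pdx u x t) (pdx (pdx u) x t)) • pdt u x t)
        + ((2 * inner ℝ (pdx u x t) (pdx (pdt u) x t)) • pdx u x t
          + (2 * (inner ℝ (pdx u x t) (pdx (pdx (pdt u)) x t)
            + inner ℝ (pdx (pdx u) x t) (pdx (pdt u) x t))) • u x t)) := by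
  have hu₀ := hu.contDiff.differentiable four_ne_zero
  have hux : ContDiff ℝ 3 (uncurry (pdx u)) := contDiff_pdx hu.contDiff three_add_one_eq_four.le
  have hut : ContDiff ℝ 3 (uncurry (pdt u)) := contDiff_pdt hu.contDiff three_add_one_eq_four.le
  have hutx : ContDiff ℝ 2 (uncurry (pdx (pdt u))) := contDiff_pdx hut two_add_one_eq_three.le
  have hutt : ContDiff ℝ 2 (uncurry (pdt (pdt u))) := contDiff_pdt hut two_add_one_eq_three.le
  have hutxx : ContDiff ℝ 1 (uncurry (pdx (pdx (pdt u)))) :=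
    contDiff_pdx hutx one_add_one_eq_two.le
  have deriv_u := hasDerivAt_pdx hu₀ x t
  have deriv_ux := hasDerivAt_pdx (hux.differentiable three_ne_zero) x t
  have deriv_ut := hasDerivAt_pdx (hut.differentiable three_ne_zero) x t
  have deriv_utx := hasDerivAt_pdx (hutx.differentiable two_ne_zero) x t
  have deriv_utt := hasDerivAt_pdx (hutt.differentiable two_ne_zero) x t
  exact hasDerivAt_eq_of_eqOn (hI x hx) (fun y hy => hu.pdx_pdx_pdt_eq hI hJ hy ht) hx
    (hasDerivAt_pdx (hutxx.differentiable one_ne_zero) x t)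
    ((hasDerivAt_cross3 deriv_u deriv_utt).neg.sub
      ((deriv_ux.norm_sq.smul deriv_ut).add
        (((deriv_ux.inner ℝ deriv_utx).const_mul 2).smul deriv_u)))

lemma norm_pdx_pdx_pdt_le (hu : IsSchrodingerFlowOn I J u) (hI : UniqueDiffOn ℝ I)
    (hJ : UniqueDiffOn ℝ J) (hx : x ∈ I) (ht : t ∈ J) :
    ‖pdx (pdx (pdt u)) x t‖ ≤ ‖pdt (pdt u) x t‖
      + (‖pdx u x t‖ ^ 2 * ‖pdt u x t‖ + 2 * (‖pdx u x t‖ * ‖pdx (pdt u) x t‖)) := by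
  have norm_u := hu.norm_eq_one x hx t ht
  rw [hu.pdx_pdx_pdt_eq hI hJ hx ht]
  refine norm_sub_le_of_le ?_ (norm_add_le_of_le ?_ ?_)
  · simpa [norm_u] using norm_cross3_le (u x t) (pdt (pdt u) x t)
  · rw [norm_smul, norm_pow, norm_norm]
  · simpa [norm_u] using norm_two_mul_inner_smul_le (pdx u x t) (pdx (pdt u) x t) (u x t)

lemma norm_pdx_pdx_pdx_pdt_le (hu : IsSchrodingerFlowOn I J u) (hI : UniqueDiffOn ℝ I)
    (hJ : UniqueDiffOn ℝ J) (hx : x ∈ I) (ht : t ∈ J) :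
    ‖pdx (pdx (pdx (pdt u))) x t‖ ≤
      (‖pdx (pdt (pdt u)) x t‖ + ‖pdx u x t‖ * ‖pdt (pdt u) x t‖)
      + ((‖pdx u x t‖ ^ 2 * ‖pdx (pdt u) x t‖
          + 2 * (‖pdx u x t‖ * ‖pdx (pdx u) x t‖ * ‖pdt u x t‖))
        + (2 * (‖pdx u x t‖ * ‖pdx (pdt u) x t‖ * ‖pdx u x t‖)
          + (2 * (‖pdx u x t‖ * ‖pdx (pdx (pdt u)) x t‖)
            + 2 * (‖pdx (pdx u) x t‖ * ‖pdx (pdt u) x t‖)))) := by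
  have norm_u := hu.norm_eq_one x hx t ht
  rw [hu.pdx_pdx_pdx_pdt_eq hI hJ hx ht, mul_add, add_smul, norm_sub_rev, sub_neg_eq_add, add_comm]
  refine norm_add_le_of_le (norm_add_le_of_le ?_ (norm_cross3_le _ _))
    (norm_add_le_of_le (norm_add_le_of_le ?_ (norm_two_mul_inner_smul_le _ _ _))
      (norm_add_le_of_le (norm_two_mul_inner_smul_le _ _ _) (norm_add_le_of_le ?_ ?_)))
  · simpa [norm_u] using norm_cross3_le (u x t) (pdx (pdt (pdt u)) x t)
  · rw [norm_smul, norm_pow, norm_norm]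
  · simpa [norm_u] using norm_two_mul_inner_smul_le (pdx u x t) (pdx (pdx (pdt u)) x t) (u x t)
  · simpa [norm_u] using norm_two_mul_inner_smul_le (pdx (pdx u) x t) (pdx (pdt u) x t) (u x t)

lemma norm_pdx_pdx_pdx_pdt_le_of_bound (hu : IsSchrodingerFlowOn I J u) (hI : UniqueDiffOn ℝ I)
    (hJ : UniqueDiffOn ℝ J) (hx : x ∈ I) (ht : t ∈ J) (hM : 1 ≤ M) (hux : ‖pdx u x t‖ ≤ M)
    (huxx : ‖pdx (pdx u) x t‖ ≤ M) :
    ‖pdx (pdx (pdx (pdt u))) x t‖ ≤ 9 * M ^ 3 * (‖pdt u x t‖ + ‖pdx (pdt u) x t‖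
      + ‖pdt (pdt u) x t‖ + ‖pdx (pdt (pdt u)) x t‖) := by
  have hutxx := hu.norm_pdx_pdx_pdt_le hI hJ hx ht
  have hutxxx := hu.norm_pdx_pdx_pdx_pdt_le hI hJ hx ht
  have one_le : 1 ≤ M ^ 3 := one_le_pow₀ hM
  have self_le : M ≤ M ^ 3 := le_self_pow₀ hM three_ne_zero
  have sq_le : M ^ 2 ≤ M ^ 3 := pow_le_pow_right₀ hM (Nat.le_succ 2)
  set v := ‖pdt u x t‖
  set vx := ‖pdx (pdt u) x t‖
  set vxx := ‖pdx (pdx (pdt u)) x t‖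
  set w := ‖pdt (pdt u) x t‖
  set wx := ‖pdx (pdt (pdt u)) x t‖
  have hM₀ : 0 ≤ M := zero_le_one.trans hM
  have hv : 0 ≤ v := norm_nonneg _
  have _ : 0 ≤ vx := norm_nonneg _
  have hw : 0 ≤ w := norm_nonneg _
  have hwx : 0 ≤ wx := norm_nonneg _
  have hvxx : vxx ≤ w + (M ^ 2 * v + 2 * (M * vx)) := hutxx.trans (by gcongr)
  calc ‖pdx (pdx (pdx (pdt u))) x t‖
      ≤ (wx + M * w) + ((M ^ 2 * vx + 2 * (M * M * v))
        + (2 * (M * vx * M) + (2 * (M * (w + (M ^ 2 * v + 2 * (M * vx)))) + 2 * (M * vx)))) :=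
        hutxxx.trans (by gcongr)
    _ = wx + 3 * (M * w) + 7 * (M ^ 2 * vx) + 2 * (M * vx) + 2 * (M ^ 2 * v) + 2 * (M ^ 3 * v) := by
        ring
    _ ≤ M ^ 3 * wx + 3 * (M ^ 3 * w) + 7 * (M ^ 3 * vx) + 2 * (M ^ 3 * vx) + 2 * (M ^ 3 * v)
        + 2 * (M ^ 3 * v) := by
        gcongr
        exact le_mul_of_one_le_left hwx one_le
    _ ≤ 9 * M ^ 3 * (v + vx + w + wx) := by
        have hM₃ : 0 ≤ M ^ 3 := pow_nonneg hM₀ 3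
        linarith [mul_nonneg hM₃ hv, mul_nonneg hM₃ hw, mul_nonneg hM₃ hwx]

lemma integral_norm_pdt_pdx_pdx_pdx_sq_le (hu : IsSchrodingerFlowOn (Icc 0 1) J u)
    (hJ : UniqueDiffOn ℝ J) (ht : t ∈ J) (hM : 1 ≤ M)
    (hux : ∀ x ∈ Icc 0 1, ‖pdx u x t‖ ≤ M)
    (huxx : ∀ x ∈ Icc 0 1, ‖pdx (pdx u) x t‖ ≤ M) :
    ∫ x in (0 : ℝ)..1, ‖pdt (pdx (pdx (pdx u))) x t‖ ^ 2 ≤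
      324 * M ^ 6 * (Hsq 1 (fun x => pdt u x t) + Hsq 1 (fun x => pdt (pdt u) x t)) := by
  have comm : pdt (pdx (pdx (pdx u))) = pdx (pdx (pdx (pdt u))) :=
    pdt_iterate_pdx_comm 3 (hu.contDiff.of_le (by norm_num))
  have hut : ContDiff ℝ 3 (uncurry (pdt u)) := contDiff_pdt hu.contDiff three_add_one_eq_four.le
  have hutt : ContDiff ℝ 2 (uncurry (pdt (pdt u))) := contDiff_pdt hut two_add_one_eq_three.le
  have slice_ut : ContDiff ℝ 3 fun x => pdt u x t := contDiff_slice hut t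
  have slice_utt : ContDiff ℝ 2 fun x => pdt (pdt u) x t := contDiff_slice hutt t
  rw [comm]
  calc ∫ x in (0 : ℝ)..1, ‖pdx (pdx (pdx (pdt u))) x t‖ ^ 2
      ≤ 4 * (9 * M ^ 3) ^ 2 * (Hsq 1 (fun x => pdt u x t) + Hsq 1 (fun x => pdt (pdt u) x t)) :=
        integral_norm_sq_le_Hsq_one_add (slice_ut.of_le (by norm_num))
          (slice_utt.of_le (by norm_num)) (slice_ut.iterate_deriv' 0 3).continuous fun x hx =>
            hu.norm_pdx_pdx_pdx_pdt_le_of_bound uniqueDiffOn_Icc_zero_one hJ hx ht hM (hux x hx)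
              (huxx x hx)
    _ = 324 * M ^ 6 * (Hsq 1 (fun x => pdt u x t) + Hsq 1 (fun x => pdt (pdt u) x t)) := by ring

end IsSchrodingerFlowOn

theorem utxxx_estimate_schrodinger_flow_general :
    ∃ C > (0 : ℝ), ∀ J : Set ℝ, UniqueDiffOn ℝ J → ∀ u : ℝ → ℝ → E3,
      IsSchrodingerFlowOn (Icc 0 1) J u → ∀ t ∈ J,
        (∫ x in (0 : ℝ)..1, ‖pdt (pdx (pdx (pdx u))) x t‖ ^ 2)
          ≤ C * (Hsq 3 (fun x => u x t) + Hsq 1 (fun x => pdt u x t) + 1) ^ 4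
            * (Hsq 1 (fun x => pdt (pdt u) x t) + 1) := by
  refine ⟨5184, by norm_num, fun J hJ u hu t ht => ?_⟩
  set N := Hsq 3 fun x => u x t
  set V := Hsq 1 fun x => pdt u x t
  set W := Hsq 1 fun x => pdt (pdt u) x t
  have hN : 0 ≤ N := Hsq_nonneg _ _
  have hV : 0 ≤ V := Hsq_nonneg _ _
  have hW : 0 ≤ W := Hsq_nonneg _ _
  have hM : 1 ≤ √(2 * (N + V + 1)) := Real.one_le_sqrt.2 (by linarith)
  have hux (x) (hx : x ∈ Icc (0 : ℝ) 1) : ‖pdx u x t‖ ≤ √(2 * (N + V + 1)) :=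
    Real.le_sqrt_of_sq_le <| (norm_pdx_sq_le (hu.contDiff.of_le (by norm_num)) hx t).trans <| by
      linarith [Hsq_mono (Nat.le_succ 2) fun y => u y t]
  have huxx (x) (hx : x ∈ Icc (0 : ℝ) 1) : ‖pdx (pdx u) x t‖ ≤ √(2 * (N + V + 1)) :=
    Real.le_sqrt_of_sq_le <| (norm_pdx_pdx_sq_le (hu.contDiff.of_le (by norm_num)) hx t).trans <| by
      linarith
  have hVW : V + W ≤ 2 * ((N + V + 1) * (W + 1)) := by
    nlinarith [mul_nonneg hN hW, mul_nonneg hV hW]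
  calc ∫ x in (0 : ℝ)..1, ‖pdt (pdx (pdx (pdx u))) x t‖ ^ 2
      ≤ 324 * √(2 * (N + V + 1)) ^ 6 * (V + W) :=
        hu.integral_norm_pdt_pdx_pdx_pdx_sq_le hJ ht hM hux huxx
    _ = 2592 * (N + V + 1) ^ 3 * (V + W) := by
        rw [pow_mul _ 2 3, Real.sq_sqrt (by positivity)]
        ring
    _ ≤ 2592 * (N + V + 1) ^ 3 * (2 * ((N + V + 1) * (W + 1))) := by gcongr
    _ = 5184 * (N + V + 1) ^ 4 * (W + 1) := by ring

theorem utxxx_estimate_schrodinger_flow :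
    ∃ C > (0:ℝ), ∀ T > (0:ℝ), ∀ u : ℝ → ℝ → E3, IsSol T u →
      ∀ t ∈ Icc (0:ℝ) T,
        (∫ x in (0:ℝ)..1, ‖pdt (pdx (pdx (pdx u))) x t‖ ^ 2)
          ≤ C * (Hsq 3 (fun x => u x t) + Hsq 1 (fun x => pdt u x t) + 1) ^ 4
            * (Hsq 1 (fun x => pdt (pdt u) x t) + 1) := by
  obtain ⟨C, hC, estimate⟩ := utxxx_estimate_schrodinger_flow_general
  exact ⟨C, hC, fun T hT u hu => estimate _ (uniqueDiffOn_Icc hT) u hu.isSchrodingerFlowOn⟩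

end
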